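/- For all w1, w2 ∈ H^0 one has Z̄(w1 *̄ w2) = Z̄(w1) · Z̄(w2); that is, the n-evaluation map Z̄ is multiplicative with respect to the n-harmonic product. -/

import Mathlib

open scoped BigOperators

/-- The two-letter alphabet {x, y}. -/
inductive Letter : Type
  | x : Letter
  | y : Letter
deriving DecidableEq

/-- `H = ℚ⟨x,y⟩`, the noncommutative polynomial ring over ℚ in two
indeterminates, realized as the monoid algebra of the free monoid on `{x,y}`. -/
abbrev H : Type := MonoidAlgebra ℚ (FreeMonoid Letter)

namespace H

/-- The monomial (word) of `H` corresponding to an element of the free monoid. -/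
noncomputable def word (w : FreeMonoid Letter) : H := MonoidAlgebra.single w 1

/-- The generator `x`. -/
noncomputable def X : H := word (FreeMonoid.of Letter.x)

/-- The generator `y`. -/
noncomputable def Y : H := word (FreeMonoid.of Letter.y)

/-- The word `z_k = x^{k-1} y` (for `k ≥ 1`). -/
def zW (k : ℕ) : FreeMonoid Letter :=
  FreeMonoid.ofList (List.replicate (k - 1) Letter.x ++ [Letter.y])

/-- `z_k = x^{k-1} y` as an element of `H`. -/
noncomputable def z (k : ℕ) : H := word (zW k)

/-- A list `[k₁,…,kₙ]` gives the word `z_{k₁} z_{k₂} ⋯ z_{kₙ}`. -/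
def zListW (ks : List ℕ) : FreeMonoid Letter :=
  FreeMonoid.ofList (ks.flatMap fun k => List.replicate (k - 1) Letter.x ++ [Letter.y])

/-- `H¹ = ℚ + Hy` as a ℚ-submodule of `H`. -/
noncomputable def H1 : Submodule ℚ H :=
  LinearMap.range (LinearMap.mulRight ℚ Y) ⊔ Submodule.span ℚ {1}

/-- `H⁰ = ℚ + xHy` as a ℚ-submodule of `H`. -/
noncomputable def H0 : Submodule ℚ H :=
  LinearMap.range ((LinearMap.mulRight ℚ Y).comp (LinearMap.mulLeft ℚ X)) ⊔
    Submodule.span ℚ {1}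

/-- Parse a word of `H¹` into the exponent list of its `z`-decomposition:
`z_{k₁}⋯z_{kₙ} ↦ [k₁,…,kₙ]` (auxiliary accumulator version). -/
def toZAux : List Letter → ℕ → List ℕ
  | [], _ => []
  | Letter.x :: r, n => toZAux r (n + 1)
  | Letter.y :: r, n => (n + 1) :: toZAux r 0

/-- The `z`-decomposition of a word of `H¹`. -/
def toZ (w : FreeMonoid Letter) : List ℕ := toZAux (FreeMonoid.toList w) 0

/-- The harmonic product on words of `H¹` (via `z`-decompositions):
`1 * w = w * 1 = w` and
`z_k w₁ * z_l w₂ = z_k (w₁ * z_l w₂) + z_l (z_k w₁ * w₂) + z_{k+l} (w₁ * w₂)`. -/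
noncomputable def harmW : List ℕ → List ℕ → H
  | [], w => word (zListW w)
  | k :: w1, [] => word (zListW (k :: w1))
  | k :: w1, l :: w2 =>
      z k * harmW w1 (l :: w2) + z l * harmW (k :: w1) w2 + z (k + l) * harmW w1 w2
termination_by w1 w2 => w1.length + w2.length
decreasing_by all_goals simp [Nat.lt_succ_iff] <;> omega

/-- The n-harmonic product on words of `H¹`:
`1 *̄ w = w *̄ 1 = w` and
`z_k w₁ *̄ z_l w₂ = z_k (w₁ *̄ z_l w₂) + z_l (z_k w₁ *̄ w₂) − z_{k+l} (w₁ *̄ w₂)`. -/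
noncomputable def nharmW : List ℕ → List ℕ → H
  | [], w => word (zListW w)
  | k :: w1, [] => word (zListW (k :: w1))
  | k :: w1, l :: w2 =>
      z k * nharmW w1 (l :: w2) + z l * nharmW (k :: w1) w2 - z (k + l) * nharmW w1 w2
termination_by w1 w2 => w1.length + w2.length
decreasing_by all_goals simp [Nat.lt_succ_iff] <;> omega

/-- The harmonic product `*` on `H¹`, extended ℚ-bilinearly. -/
noncomputable def harm (a b : H) : H :=
  Finsupp.sum a.coeff fun w1 c1 =>
    Finsupp.sum b.coeff fun w2 c2 => (c1 * c2) • harmW (toZ w1) (toZ w2)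

/-- The n-harmonic product `*̄` on `H¹`, extended ℚ-bilinearly. -/
noncomputable def nharm (a b : H) : H :=
  Finsupp.sum a.coeff fun w1 c1 =>
    Finsupp.sum b.coeff fun w2 c2 => (c1 * c2) • nharmW (toZ w1) (toZ w2)

/-- The letter exchange `τ(x) = y`, `τ(y) = x`. -/
def τ : Letter → Letter
  | Letter.x => Letter.y
  | Letter.y => Letter.x

/-- `δ(w) = 1` if `w` is the empty word, `0` otherwise. -/
def δ : List Letter → ℚ
  | [] => 1
  | _ :: _ => 0

/-- The shuffle product on words:
`1 ш w = w ш 1 = w` and `u₁w₁ ш u₂w₂ = u₁(w₁ ш u₂w₂) + u₂(u₁w₁ ш w₂)`. -/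
noncomputable def shW : List Letter → List Letter → H
  | [], w => word (FreeMonoid.ofList w)
  | u :: w, [] => word (FreeMonoid.ofList (u :: w))
  | u1 :: w1, u2 :: w2 =>
      word (FreeMonoid.of u1) * shW w1 (u2 :: w2) +
        word (FreeMonoid.of u2) * shW (u1 :: w1) w2
termination_by w1 w2 => w1.length + w2.length
decreasing_by all_goals simp [Nat.lt_succ_iff]

/-- The n-shuffle product on words: `1 ш̄ w = w ш̄ 1 = w` and
`u₁w₁ ш̄ u₂w₂ = u₁(w₁ ш̄ u₂w₂) + u₂(u₁w₁ ш̄ w₂) − δ(w₁)τ(u₁)u₂w₂ − δ(w₂)τ(u₂)u₁w₁`. -/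
noncomputable def nshW : List Letter → List Letter → H
  | [], w => word (FreeMonoid.ofList w)
  | u :: w, [] => word (FreeMonoid.ofList (u :: w))
  | u1 :: w1, u2 :: w2 =>
      word (FreeMonoid.of u1) * nshW w1 (u2 :: w2) +
        word (FreeMonoid.of u2) * nshW (u1 :: w1) w2 -
        δ w1 • word (FreeMonoid.ofList (τ u1 :: u2 :: w2)) -
        δ w2 • word (FreeMonoid.ofList (τ u2 :: u1 :: w1))
termination_by w1 w2 => w1.length + w2.length
decreasing_by all_goals simp [Nat.lt_succ_iff]

/-- The shuffle product `ш` on `H`, extended ℚ-bilinearly. -/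
noncomputable def sh (a b : H) : H :=
  Finsupp.sum a.coeff fun w1 c1 =>
    Finsupp.sum b.coeff fun w2 c2 =>
      (c1 * c2) • shW (FreeMonoid.toList w1) (FreeMonoid.toList w2)

/-- The n-shuffle product `ш̄` on `H`, extended ℚ-bilinearly. -/
noncomputable def nsh (a b : H) : H :=
  Finsupp.sum a.coeff fun w1 c1 =>
    Finsupp.sum b.coeff fun w2 c2 =>
      (c1 * c2) • nshW (FreeMonoid.toList w1) (FreeMonoid.toList w2)

/-- `S₁`: the ℚ-algebra endomorphism of `H` with `S₁(x) = x`, `S₁(y) = x + y`. -/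
noncomputable def S1 : H →ₐ[ℚ] H :=
  MonoidAlgebra.lift ℚ H (FreeMonoid Letter)
    (FreeMonoid.lift fun u => match u with
      | Letter.x => X
      | Letter.y => X + Y)

/-- `S₂`: the ℚ-algebra endomorphism of `H` with `S₂(x) = x`, `S₂(y) = y − x`. -/
noncomputable def S2 : H →ₐ[ℚ] H :=
  MonoidAlgebra.lift ℚ H (FreeMonoid Letter)
    (FreeMonoid.lift fun u => match u with
      | Letter.x => X
      | Letter.y => Y - X)

/-- `S` on a word: `S(1) = 1` and `S(Fy) = S₁(F)y`. -/
noncomputable def SW (w : FreeMonoid Letter) : H :=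
  match (FreeMonoid.toList w).getLast? with
  | some Letter.y =>
      S1 (word (FreeMonoid.ofList (FreeMonoid.toList w).dropLast)) * Y
  | _ => word w

/-- The ℚ-linear map `S : H¹ → H¹` with `S(1) = 1`, `S(Fy) = S₁(F)y`. -/
noncomputable def S (a : H) : H := Finsupp.sum a.coeff fun w c => c • SW w

/-- `S̃` on a word: `S̃(1) = 1` and `S̃(Fy) = S₂(F)y`. -/
noncomputable def StW (w : FreeMonoid Letter) : H :=
  match (FreeMonoid.toList w).getLast? with
  | some Letter.y =>
      S2 (word (FreeMonoid.ofList (FreeMonoid.toList w).dropLast)) * Y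
  | _ => word w

/-- The ℚ-linear map `S̃ : H¹ → H¹` with `S̃(1) = 1`, `S̃(Fy) = S₂(F)y`. -/
noncomputable def St (a : H) : H := Finsupp.sum a.coeff fun w c => c • StW w

/-- The multiple zeta value `ζ(k₁,…,kₙ)`: the sum over strictly decreasing
tuples `m₁ > m₂ > ⋯ > mₙ > 0` of `1/(m₁^{k₁}⋯mₙ^{kₙ})`. -/
noncomputable def mzeta (ks : List ℕ) : ℝ :=
  ∑' m : {f : Fin ks.length → ℕ // (∀ i, 0 < f i) ∧
      ∀ i j : Fin ks.length, i < j → f j < f i},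
    ∏ i : Fin ks.length, ((m.1 i : ℝ) ^ ks.get i)⁻¹

/-- The non-strict multiple zeta value `ζ̄(k₁,…,kₙ)`: the sum over weakly
decreasing tuples `m₁ ≥ m₂ ≥ ⋯ ≥ mₙ > 0` of `1/(m₁^{k₁}⋯mₙ^{kₙ})`. -/
noncomputable def nmzeta (ks : List ℕ) : ℝ :=
  ∑' m : {f : Fin ks.length → ℕ // (∀ i, 0 < f i) ∧
      ∀ i j : Fin ks.length, i ≤ j → f j ≤ f i},
    ∏ i : Fin ks.length, ((m.1 i : ℝ) ^ ks.get i)⁻¹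

/-- The evaluation map `Z : H⁰ → ℝ`, `Z(1) = 1`,
`Z(z_{k₁}⋯z_{kₙ}) = ζ(k₁,…,kₙ)` (extended ℚ-linearly to `H`). -/
noncomputable def Z (a : H) : ℝ := Finsupp.sum a.coeff fun w c => (c : ℝ) * mzeta (toZ w)

/-- The n-evaluation map `Z̄ : H⁰ → ℝ`, `Z̄(1) = 1`,
`Z̄(z_{k₁}⋯z_{kₙ}) = ζ̄(k₁,…,kₙ)` (extended ℚ-linearly to `H`). -/
noncomputable def Zbar (a : H) : ℝ := Finsupp.sum a.coeff fun w c => (c : ℝ) * nmzeta (toZ w)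

/-- `i`-fold n-harmonic power: `a^{*̄ 0} = 1`, `a^{*̄ (i+1)} = a *̄ a^{*̄ i}`. -/
noncomputable def nharmPow : ℕ → H → H
  | 0, _ => 1
  | i + 1, a => nharm a (nharmPow i a)

/-- `i`-fold n-shuffle power: `a^{ш̄ 0} = 1`, `a^{ш̄ (i+1)} = a ш̄ a^{ш̄ i}`. -/
noncomputable def nshPow : ℕ → H → H
  | 0, _ => 1
  | i + 1, a => nsh a (nshPow i a)

end H

namespace H

/-- Truncated non-strict multiple harmonic sums. -/
noncomputable def TS : List ℕ → ℕ → ℝ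
  | [], _ => 1
  | k :: ks, N => ∑ m ∈ Finset.Icc 1 N, ((m : ℝ) ^ k)⁻¹ * TS ks m

theorem TS_nonneg (ks : List ℕ) (N : ℕ) : 0 ≤ TS ks N := by
  induction ks generalizing N with
  | nil => simp [TS]
  | cons k ks ih =>
    simp only [TS]
    exact Finset.sum_nonneg fun m _ => mul_nonneg (by positivity) (ih m)

theorem TS_mul_cons (k l : ℕ) (u v : List ℕ) (N : ℕ) :
    TS (k :: u) N * TS (l :: v) N =
      ∑ m ∈ Finset.Icc 1 N, ((m : ℝ) ^ k)⁻¹ * (TS u m * TS (l :: v) m) +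
      ∑ m ∈ Finset.Icc 1 N, ((m : ℝ) ^ l)⁻¹ * (TS (k :: u) m * TS v m) -
      ∑ m ∈ Finset.Icc 1 N, ((m : ℝ) ^ (k + l))⁻¹ * (TS u m * TS v m) := by
  induction N with
  | zero => simp [TS]
  | succ N ih =>
    have h1 : ∀ (j : ℕ) (w : List ℕ), TS (j :: w) (N + 1) =
        TS (j :: w) N + (((N + 1 : ℕ) : ℝ) ^ j)⁻¹ * TS w (N + 1) := by
      intro j w
      simp only [TS]
      rw [Finset.sum_Icc_succ_top (by omega)]
    simp only [Finset.sum_Icc_succ_top (show 1 ≤ N + 1 by omega)]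
    have h2 : (((N + 1 : ℕ) : ℝ) ^ (k + l))⁻¹ =
      (((N + 1 : ℕ) : ℝ) ^ k)⁻¹ * (((N + 1 : ℕ) : ℝ) ^ l)⁻¹ := by
      rw [pow_add, mul_inv]
    rw [h2, h1 k u, h1 l v]
    linear_combination ih

/-- Linear extension of a real valued function on words. -/
noncomputable def LL (φ : FreeMonoid Letter → ℝ) : H →ₗ[ℚ] ℝ where
  toFun a := Finsupp.sum a.coeff fun w c => (c : ℝ) * φ w
  map_add' a b := by
    rw [MonoidAlgebra.coeff_add, Finsupp.sum_add_index'] <;> intros <;> simp [add_mul]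
  map_smul' r a := by
    rw [MonoidAlgebra.coeff_smul, Finsupp.sum_smul_index' (by simp), Finsupp.smul_sum]
    refine Finsupp.sum_congr fun w _ => ?_
    simp [Rat.smul_def, mul_assoc]

theorem LL_apply (φ : FreeMonoid Letter → ℝ) (a : H) :
    LL φ a = Finsupp.sum a.coeff fun w c => (c : ℝ) * φ w := rfl

theorem LL_single (φ : FreeMonoid Letter → ℝ) (w : FreeMonoid Letter) (c : ℚ) :
    LL φ (MonoidAlgebra.single w c) = c * φ w := by
  rw [LL_apply, MonoidAlgebra.coeff_single, Finsupp.sum_single_index (by simp)]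

theorem LL_word (φ : FreeMonoid Letter → ℝ) (w : FreeMonoid Letter) :
    LL φ (word w) = φ w := by
  rw [word, LL_single]; simp

theorem toZAux_replicate (j n : ℕ) (r : List Letter) :
    toZAux (List.replicate j Letter.x ++ r) n = toZAux r (n + j) := by
  induction j generalizing n with
  | zero => simp
  | succ j ih =>
    rw [List.replicate_succ, List.cons_append, toZAux, ih]
    congr 1; omega

theorem toZ_zW_mul (k : ℕ) (hk : 0 < k) (w : FreeMonoid Letter) :
    toZ (zW k * w) = k :: toZ w := by
  unfold toZ zW
  rw [FreeMonoid.toList_mul, FreeMonoid.toList_ofList, List.append_assoc, toZAux_replicate]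
  simp only [List.cons_append, List.nil_append, toZAux]
  congr 1; omega

theorem zListW_cons (k : ℕ) (ks : List ℕ) : zListW (k :: ks) = zW k * zListW ks := by
  unfold zListW zW
  rw [List.flatMap_cons, FreeMonoid.ofList_append]

theorem toZ_zListW (ks : List ℕ) (h : ∀ k ∈ ks, 0 < k) : toZ (zListW ks) = ks := by
  induction ks with
  | nil => rfl
  | cons k ks ih =>
    rw [zListW_cons, toZ_zW_mul k (h k (by simp)), ih fun j hj => h j (by simp [hj])]

theorem toZAux_pos (w : List Letter) (n : ℕ) : ∀ k ∈ toZAux w n, 0 < k := by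
  induction w generalizing n with
  | nil => simp [toZAux]
  | cons a r ih =>
    cases a with
    | x => simpa [toZAux] using ih (n + 1)
    | y =>
      intro k hk
      simp only [toZAux, List.mem_cons] at hk
      rcases hk with rfl | hk
      · omega
      · exact ih 0 k hk

theorem toZ_pos (w : FreeMonoid Letter) : ∀ k ∈ toZ w, 0 < k := toZAux_pos _ _

theorem LL_z_mul (N k : ℕ) (hk : 0 < k) (h : H) :
    LL (fun w => TS (toZ w) N) (z k * h) =
      ∑ m ∈ Finset.Icc 1 N, ((m : ℝ) ^ k)⁻¹ * LL (fun w => TS (toZ w) m) h := by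
  induction h using MonoidAlgebra.induction_linear with
  | zero => simp
  | add a b ha hb =>
    rw [mul_add, map_add, ha, hb, ← Finset.sum_add_distrib]
    simp [mul_add]
  | single w c =>
    rw [z, word, MonoidAlgebra.single_mul_single, LL_single, toZ_zW_mul k hk]
    simp only [LL_single, TS, Finset.mul_sum, one_mul]
    refine Finset.sum_congr rfl fun m _ => by ring

theorem LL_nharmW (u v : List ℕ) (hu : ∀ k ∈ u, 0 < k) (hv : ∀ k ∈ v, 0 < k) (N : ℕ) :
    LL (fun w => TS (toZ w) N) (nharmW u v) = TS u N * TS v N := by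
  induction u, v using nharmW.induct generalizing N with
  | case1 v => rw [nharmW, LL_word, toZ_zListW _ hv]; simp [TS]
  | case2 k u => rw [nharmW, LL_word, toZ_zListW _ hu]; simp [TS]
  | case3 k u l v ih1 ih2 ih3 =>
    have hk : 0 < k := hu k (by simp)
    have hl : 0 < l := hv l (by simp)
    have hu' : ∀ k ∈ u, 0 < k := fun j hj => hu j (by simp [hj])
    have hv' : ∀ k ∈ v, 0 < k := fun j hj => hv j (by simp [hj])
    rw [nharmW, map_sub, map_add, LL_z_mul _ _ hk, LL_z_mul _ _ hl, LL_z_mul _ _ (by omega),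
      TS_mul_cons]
    simp only [ih1 hu' hv, ih2 hu hv', ih3 hu' hv']

theorem LL_nharm (a b : H) (N : ℕ) :
    LL (fun w => TS (toZ w) N) (nharm a b) =
      LL (fun w => TS (toZ w) N) a * LL (fun w => TS (toZ w) N) b := by
  rw [nharm, map_finsuppSum, LL_apply _ a, Finsupp.sum, Finsupp.sum, Finset.sum_mul]
  refine Finset.sum_congr rfl fun w1 _ => ?_
  rw [map_finsuppSum, LL_apply _ b, Finsupp.sum, Finsupp.sum, Finset.mul_sum]
  refine Finset.sum_congr rfl fun w2 _ => ?_
  rw [map_smul, LL_nharmW _ _ (toZ_pos w1) (toZ_pos w2), Rat.smul_def]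
  push_cast; ring

/-- Admissible exponent lists. -/
def AdmL : List ℕ → Prop
  | [] => True
  | k :: _ => 2 ≤ k

/-- Elements supported on admissible words. -/
def Adm : Submodule ℚ H where
  carrier := {a | ∀ w, a.coeff w ≠ 0 → AdmL (toZ w)}
  zero_mem' := by intro w hw; simp at hw
  add_mem' := by
    intro a b ha hb w hw
    by_cases h : a.coeff w = 0
    · refine hb w fun h' => hw ?_
      simp [h, h']
    · exact ha w h
  smul_mem' := by
    intro c a ha w hw
    refine ha w fun h => hw ?_
    simp [h]

theorem single_mem_Adm (w : FreeMonoid Letter) (c : ℚ) (h : AdmL (toZ w)) :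
    (MonoidAlgebra.single w c : H) ∈ Adm := by
  classical
  intro w' hw'
  rw [MonoidAlgebra.coeff_single_apply] at hw'
  split_ifs at hw' with e
  · exact e ▸ h
  · exact absurd rfl hw'

theorem z_mul_mem_Adm (k : ℕ) (hk : 2 ≤ k) (h : H) : z k * h ∈ Adm := by
  induction h using MonoidAlgebra.induction_linear with
  | zero => simp
  | add a b ha hb => rw [mul_add]; exact add_mem ha hb
  | single w c =>
    rw [z, word, MonoidAlgebra.single_mul_single]
    apply single_mem_Adm
    rw [toZ_zW_mul k (by omega)]
    exact hk

theorem nharmW_mem_Adm (u v : List ℕ) (hu : ∀ k ∈ u, 0 < k) (hv : ∀ k ∈ v, 0 < k)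
    (au : AdmL u) (av : AdmL v) : nharmW u v ∈ Adm := by
  match u, v with
  | [], v => rw [nharmW]; apply single_mem_Adm; rwa [toZ_zListW _ hv]
  | k :: u, [] => rw [nharmW]; apply single_mem_Adm; rwa [toZ_zListW _ hu]
  | k :: u, l :: v =>
    rw [nharmW]
    have hk : 2 ≤ k := au
    exact sub_mem (add_mem (z_mul_mem_Adm _ au _) (z_mul_mem_Adm _ av _))
      (z_mul_mem_Adm _ (by omega) _)

theorem nharm_mem_Adm (a b : H) (ha : a ∈ Adm) (hb : b ∈ Adm) : nharm a b ∈ Adm := by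
  refine Submodule.sum_mem _ fun w1 h1 => Submodule.sum_mem _ fun w2 h2 => ?_
  exact Submodule.smul_mem _ _ (nharmW_mem_Adm _ _ (toZ_pos _) (toZ_pos _)
    (ha _ (Finsupp.mem_support_iff.1 h1)) (hb _ (Finsupp.mem_support_iff.1 h2)))

theorem AdmL_toZAux (w : List Letter) (n : ℕ) (hn : 1 ≤ n) : AdmL (toZAux w n) := by
  induction w generalizing n with
  | nil => trivial
  | cons a r ih =>
    cases a with
    | x => exact ih (n + 1) (by omega)
    | y => show 2 ≤ n + 1; omega

theorem X_mul_mem_Adm (h : H) : X * h ∈ Adm := by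
  induction h using MonoidAlgebra.induction_linear with
  | zero => simp
  | add a b ha hb => rw [mul_add]; exact add_mem ha hb
  | single w c =>
    rw [X, word, MonoidAlgebra.single_mul_single]
    apply single_mem_Adm
    exact AdmL_toZAux _ 1 le_rfl

theorem H0_le_Adm : H0 ≤ Adm := by
  refine sup_le ?_ ?_
  · rintro _ ⟨h, rfl⟩
    simp only [LinearMap.comp_apply, LinearMap.mulLeft_apply, LinearMap.mulRight_apply, mul_assoc]
    exact X_mul_mem_Adm _
  · rw [Submodule.span_le]
    rintro _ rfl
    exact single_mem_Adm _ _ trivial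

/-- Weakly decreasing positive tuples bounded by `N`. -/
def AF : (n : ℕ) → ℕ → Finset (Fin n → ℕ)
  | 0, _ => {Fin.elim0}
  | n + 1, N => (Finset.Icc 1 N).biUnion fun m => (AF n m).image fun f => Fin.cons m f

theorem mem_AF (n N : ℕ) (f : Fin n → ℕ) :
    f ∈ AF n N ↔ (∀ i, f i ≤ N) ∧ (∀ i, 0 < f i) ∧ ∀ i j : Fin n, i ≤ j → f j ≤ f i := by
  induction n generalizing N with
  | zero => simp [AF, Subsingleton.elim f Fin.elim0]
  | succ n ih =>
    simp only [AF, Finset.mem_biUnion, Finset.mem_Icc, Finset.mem_image]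
    constructor
    · rintro ⟨m, ⟨h1, h2⟩, g, hg, rfl⟩
      obtain ⟨g1, g2, g3⟩ := (ih m g).1 hg
      refine ⟨fun i => ?_, fun i => ?_, fun i j hij => ?_⟩
      · refine Fin.cases ?_ (fun i => ?_) i
        · simpa using h2
        · simpa using (g1 i).trans h2
      · refine Fin.cases ?_ (fun i => ?_) i
        · simpa using Nat.lt_of_succ_le h1
        · simpa using g2 i
      · induction i using Fin.cases with
        | zero =>
          induction j using Fin.cases with
          | zero => exact le_rfl
          | succ j => simpa using g1 j
        | succ i =>
          induction j using Fin.cases with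
          | zero => exact absurd hij (by simp [Fin.le_def])
          | succ j => simpa using g3 i j (by simpa using hij)
    · rintro ⟨h1, h2, h3⟩
      refine ⟨f 0, ⟨h2 0, h1 0⟩, Fin.tail f, (ih _ _).2 ⟨fun i => ?_, fun i => ?_, fun i j hij => ?_⟩,
        Fin.cons_self_tail f⟩
      · exact h3 0 i.succ (Fin.zero_le _)
      · exact h2 i.succ
      · exact h3 i.succ j.succ (by simpa using hij)

theorem TS_eq (ks : List ℕ) (N : ℕ) :
    TS ks N = ∑ f ∈ AF ks.length N, ∏ i : Fin ks.length, ((f i : ℝ) ^ ks.get i)⁻¹ := by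
  induction ks generalizing N with
  | nil => simp [TS, AF]
  | cons k ks ih =>
    simp only [TS, List.length_cons, AF]
    rw [Finset.sum_biUnion]
    · refine Finset.sum_congr rfl fun m _ => ?_
      rw [Finset.sum_image, ih, Finset.mul_sum]
      · refine Finset.sum_congr rfl fun f _ => ?_
        rw [Fin.prod_univ_succ]
        simp
      · intro f _ g _ h
        exact (Fin.cons_injective2 h).2
    · intro m _ m' _ hmm
      rw [Function.onFun, Finset.disjoint_left]
      intro f hf hf'
      simp only [Finset.mem_image] at hf hf'
      obtain ⟨g, _, rfl⟩ := hf
      obtain ⟨g', _, h⟩ := hf'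
      exact hmm (Fin.cons_injective2 h).1.symm

theorem TS_mono (ks : List ℕ) : Monotone (TS ks) := by
  intro M N h
  cases ks with
  | nil => simp [TS]
  | cons k ks =>
    simp only [TS]
    refine Finset.sum_le_sum_of_subset_of_nonneg (Finset.Icc_subset_Icc_right h) fun m _ _ => ?_
    exact mul_nonneg (by positivity) (TS_nonneg ks m)

theorem TS_le_log (ks : List ℕ) (hk : ∀ k ∈ ks, 0 < k) (N : ℕ) :
    TS ks N ≤ (1 + Real.log N) ^ ks.length := by
  induction ks generalizing N with
  | nil => simp [TS]
  | cons k ks ih =>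
    have ih' := ih fun j hj => hk j (by simp [hj])
    have hk0 : 0 < k := hk k (by simp)
    have hlog : (0 : ℝ) ≤ 1 + Real.log N := by
      have := Real.log_natCast_nonneg N
      linarith
    have hh := harmonic_le_one_add_log N
    rw [harmonic_eq_sum_Icc] at hh
    push_cast at hh
    calc TS (k :: ks) N ≤ ∑ m ∈ Finset.Icc 1 N, (m : ℝ)⁻¹ * TS ks N := by
          simp only [TS]
          refine Finset.sum_le_sum fun m hm => ?_
          rw [Finset.mem_Icc] at hm
          have hm1 : (1 : ℝ) ≤ m := by exact_mod_cast hm.1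
          refine mul_le_mul ?_ (TS_mono ks hm.2) (TS_nonneg _ _) (by positivity)
          exact inv_anti₀ (by positivity) (le_self_pow₀ hm1 (by omega))
      _ = (∑ m ∈ Finset.Icc 1 N, (m : ℝ)⁻¹) * TS ks N := by rw [Finset.sum_mul]
      _ ≤ (1 + Real.log N) * (1 + Real.log N) ^ ks.length :=
          mul_le_mul hh (ih' N) (TS_nonneg _ _) hlog
      _ = _ := by rw [List.length_cons, pow_succ']

theorem log_pow_le (n : ℕ) : ∃ C : ℝ, 0 ≤ C ∧ ∀ m : ℕ, 1 ≤ m →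
    (1 + Real.log m) ^ n ≤ C * (m : ℝ) ^ (1 / 2 : ℝ) := by
  set ε : ℝ := 1 / (2 * (n + 1)) with hε
  have hε0 : 0 < ε := by positivity
  refine ⟨(1 + 1 / ε) ^ n, by positivity, fun m hm => ?_⟩
  have hm1 : (1 : ℝ) ≤ m := by exact_mod_cast hm
  have h1 : 1 + Real.log m ≤ (1 + 1 / ε) * (m : ℝ) ^ ε := by
    have := Real.log_natCast_le_rpow_div m hε0
    have h2 := Real.one_le_rpow hm1 hε0.le
    rw [add_mul, one_mul, one_div_mul_eq_div]
    linarith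
  have h0 : 0 ≤ 1 + Real.log m := by
    have := Real.log_natCast_nonneg m
    linarith
  refine (pow_le_pow_left₀ h0 h1 n).trans ?_
  rw [mul_pow]
  refine mul_le_mul_of_nonneg_left ?_ (by positivity)
  rw [← Real.rpow_natCast, ← Real.rpow_mul (by positivity)]
  refine Real.rpow_le_rpow_of_exponent_le hm1 ?_
  rw [hε, one_div_mul_eq_div, div_le_div_iff₀ (by positivity) (by positivity)]
  linarith

theorem TS_bdd (ks : List ℕ) (hk : ∀ k ∈ ks, 0 < k) (ha : AdmL ks) :
    ∃ C : ℝ, ∀ N, TS ks N ≤ C := by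
  cases ks with
  | nil => exact ⟨1, fun N => by simp [TS]⟩
  | cons k ks =>
    have hk2 : 2 ≤ k := ha
    obtain ⟨C, hC, h⟩ := log_pow_le ks.length
    have hs : Summable fun m : ℕ => ((m : ℝ) ^ (3 / 2 : ℝ))⁻¹ :=
      Real.summable_nat_rpow_inv.2 (by norm_num)
    refine ⟨C * ∑' m : ℕ, ((m : ℝ) ^ (3 / 2 : ℝ))⁻¹, fun N => ?_⟩
    have h1 : TS (k :: ks) N ≤ C * ∑ m ∈ Finset.Icc 1 N, ((m : ℝ) ^ (3 / 2 : ℝ))⁻¹ := by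
      simp only [TS]
      rw [Finset.mul_sum]
      refine Finset.sum_le_sum fun m hm => ?_
      rw [Finset.mem_Icc] at hm
      have hm1 : (1 : ℝ) ≤ m := by exact_mod_cast hm.1
      have hm0 : (0 : ℝ) < m := by linarith
      have e : ((m : ℝ) ^ (3 / 2 : ℝ))⁻¹ = ((m : ℝ) ^ 2)⁻¹ * (m : ℝ) ^ (1 / 2 : ℝ) := by
        rw [← Real.rpow_natCast, ← Real.rpow_neg hm0.le, ← Real.rpow_neg hm0.le,
          ← Real.rpow_add hm0]
        norm_num
      calc ((m : ℝ) ^ k)⁻¹ * TS ks m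
          ≤ ((m : ℝ) ^ 2)⁻¹ * (C * (m : ℝ) ^ (1 / 2 : ℝ)) := by
            refine mul_le_mul ?_ ((TS_le_log ks (fun j hj => hk j (by simp [hj])) m).trans
              (h m hm.1)) (TS_nonneg _ _) (by positivity)
            exact inv_anti₀ (by positivity) (pow_le_pow_right₀ hm1 hk2)
        _ = _ := by rw [e]; ring
    refine h1.trans (mul_le_mul_of_nonneg_left ?_ hC)
    exact hs.sum_le_tsum _ fun m _ => by positivity

theorem TS_tendsto (ks : List ℕ) (hk : ∀ k ∈ ks, 0 < k) (ha : AdmL ks) :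
    Filter.Tendsto (TS ks) Filter.atTop (nhds (nmzeta ks)) := by
  obtain ⟨C, hC⟩ := TS_bdd ks hk ha
  let P : (Fin ks.length → ℕ) → Prop := fun f => (∀ i, 0 < f i) ∧
      ∀ i j : Fin ks.length, i ≤ j → f j ≤ f i
  classical
  let F : {f // P f} → ℝ := fun m => ∏ i : Fin ks.length, ((m.1 i : ℝ) ^ ks.get i)⁻¹
  let s : ℕ → Finset {f // P f} := fun N => (AF ks.length N).subtype P
  have hmem : ∀ N (f : {f // P f}), f ∈ s N ↔ ∀ i, f.1 i ≤ N := by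
    intro N f
    rw [Finset.mem_subtype, mem_AF]
    exact ⟨fun h => h.1, fun h => ⟨h, f.2⟩⟩
  have hsum : ∀ N, ∑ f ∈ s N, F f = TS ks N := by
    intro N
    rw [TS_eq]
    exact Finset.sum_subtype_of_mem
      (fun f : Fin ks.length → ℕ => ∏ i : Fin ks.length, ((f i : ℝ) ^ ks.get i)⁻¹)
      fun f hf => ((mem_AF _ _ _).1 hf).2
  have hF : 0 ≤ F := fun f => Finset.prod_nonneg fun i _ => by positivity
  have hs : Filter.Tendsto s Filter.atTop Filter.atTop := by
    refine Filter.tendsto_atTop_finset_of_monotone ?_ ?_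
    · intro M N h f hf
      rw [hmem] at hf ⊢
      exact fun i => (hf i).trans h
    · intro f
      refine ⟨∑ i, f.1 i, (hmem _ _).2 fun i => ?_⟩
      exact Finset.single_le_sum (f := f.1) (fun _ _ => Nat.zero_le _) (Finset.mem_univ i)
  have hS : Summable F := by
    refine summable_of_sum_le (c := C) hF fun u => ?_
    obtain ⟨N, hN⟩ := (hs.eventually (Filter.eventually_ge_atTop u)).exists
    calc ∑ x ∈ u, F x ≤ ∑ x ∈ s N, F x :=
          Finset.sum_le_sum_of_subset_of_nonneg hN fun x _ _ => hF x
      _ ≤ C := by rw [hsum]; exact hC N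
  have := (hS.hasSum : Filter.Tendsto _ _ _).comp hs
  refine this.congr fun N => hsum N

theorem LL_tendsto (a : H) (ha : a ∈ Adm) :
    Filter.Tendsto (fun N => LL (fun w => TS (toZ w) N) a) Filter.atTop (nhds (Zbar a)) := by
  simp only [LL_apply, Zbar, Finsupp.sum]
  refine tendsto_finsetSum _ fun w hw => Filter.Tendsto.const_mul _ ?_
  exact TS_tendsto _ (toZ_pos w) (ha w (Finsupp.mem_support_iff.1 hw))

end H


open H

/-- The n-evaluation map `Z̄` is multiplicative with respect to the
n-harmonic product: `Z̄(w₁ *̄ w₂) = Z̄(w₁) Z̄(w₂)` for `w₁, w₂ ∈ H⁰`. -/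
theorem Zbar_nharm_mul :
    ∀ w1 ∈ H0, ∀ w2 ∈ H0, Zbar (nharm w1 w2) = Zbar w1 * Zbar w2 := by
  intro a ha b hb
  have ha' := H0_le_Adm ha
  have hb' := H0_le_Adm hb
  refine tendsto_nhds_unique (LL_tendsto _ (nharm_mem_Adm a b ha' hb')) ?_
  simp only [LL_nharm]
  exact (LL_tendsto a ha').mul (LL_tendsto b hb')
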